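/- arXiv:2409.06497 — 3 statements merged into one kernel-verified Lean document; each statement's English description precedes it below -/
import Mathlib

section
/- For every Lebesgue-measurable set A ⊆ (0,1], the series Σ_{k=1}^∞ ( k^{-4/3} ∫_A x^{k^{-1/3} − 1} dx )^2 converges (is finite). -/
open MeasureTheory

/-! Enlarging `A ⊆ (0, 1]` to `(0, 1]` gives `∫_A x ^ (s - 1) dx ≤ 1 / s` for `s > 0`. Hence, with
`s = k ^ q`, the square of `k ^ p * ∫_A x ^ (s - 1) dx` is at most `k ^ (2 * (p - q))`, which is
`k ^ (-2)` for `p = -4/3` and `q = -1/3`. -/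

open Set

lemma ae_restrict_rpow_nonneg {A : Set ℝ} (hA : A ⊆ Ici 0) (r : ℝ) :
    0 ≤ᵐ[volume.restrict A] fun x : ℝ => x ^ r := by
  refine ae_restrict_of_ae_restrict_of_subset hA ?_
  filter_upwards [ae_restrict_mem measurableSet_Ici] with x hx
  exact Real.rpow_nonneg hx r

lemma setIntegral_rpow_nonneg {A : Set ℝ} (hA : A ⊆ Ici 0) (r : ℝ) :
    0 ≤ ∫ x in A, x ^ r :=
  setIntegral_nonneg_of_ae_restrict (ae_restrict_rpow_nonneg hA r)

lemma setIntegral_rpow_le {A : Set ℝ} {b r : ℝ} (hA : A ⊆ Ioc 0 b) (hb : 0 ≤ b) (hr : -1 < r) :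
    ∫ x in A, x ^ r ≤ b ^ (r + 1) / (r + 1) := by
  have integrable : IntegrableOn (fun x : ℝ => x ^ r) (Ioc 0 b) :=
    (intervalIntegrable_iff_integrableOn_Ioc_of_le hb).1
      (intervalIntegral.intervalIntegrable_rpow' hr)
  have nonneg : 0 ≤ᵐ[volume.restrict (Ioc 0 b)] fun x : ℝ => x ^ r :=
    ae_restrict_rpow_nonneg (fun _ hx => hx.1.le) r
  calc ∫ x in A, x ^ r
      ≤ ∫ x in Ioc 0 b, x ^ r := setIntegral_mono_set integrable nonneg hA.eventuallyLE
    _ = ∫ x in 0..b, x ^ r := (intervalIntegral.integral_of_le hb).symm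
    _ = b ^ (r + 1) / (r + 1) := by
      rw [integral_rpow (Or.inl hr), Real.zero_rpow (by linarith), sub_zero]

lemma summable_natCast_add_one_rpow {p : ℝ} :
    Summable (fun k : ℕ => ((k : ℝ) + 1) ^ p) ↔ p < -1 := by
  simpa only [Nat.cast_add, Nat.cast_one, Real.summable_nat_rpow] using
    summable_nat_add_iff (f := fun n : ℕ => (n : ℝ) ^ p) 1

theorem example_sq_summable_general {A : Set ℝ} (hA : A ⊆ Ioc 0 1) {p q : ℝ}
    (hpq : p - q < -1 / 2) :
    Summable (fun k : ℕ => (((k : ℝ) + 1) ^ p * ∫ x in A, x ^ (((k : ℝ) + 1) ^ q - 1)) ^ 2) := by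
  have dominating : Summable (fun k : ℕ => ((k : ℝ) + 1) ^ ((p - q) * 2)) :=
    summable_natCast_add_one_rpow.2 (by linarith)
  refine dominating.of_nonneg_of_le (fun k => sq_nonneg _) fun k => ?_
  have hk : 0 < (k : ℝ) + 1 := k.cast_add_one_pos
  have hs : 0 < ((k : ℝ) + 1) ^ q := Real.rpow_pos_of_pos hk q
  have integral_nonneg : 0 ≤ ∫ x in A, x ^ (((k : ℝ) + 1) ^ q - 1) :=
    setIntegral_rpow_nonneg (fun _ hx => (hA hx).1.le) _
  have integral_le : ∫ x in A, x ^ (((k : ℝ) + 1) ^ q - 1) ≤ 1 / ((k : ℝ) + 1) ^ q := by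
    simpa only [sub_add_cancel, Real.one_rpow] using
      setIntegral_rpow_le hA zero_le_one (by linarith : -1 < ((k : ℝ) + 1) ^ q - 1)
  calc (((k : ℝ) + 1) ^ p * ∫ x in A, x ^ (((k : ℝ) + 1) ^ q - 1)) ^ 2
      ≤ (((k : ℝ) + 1) ^ p * (1 / ((k : ℝ) + 1) ^ q)) ^ 2 := by gcongr
    _ = (((k : ℝ) + 1) ^ (p - q)) ^ 2 := by rw [mul_one_div, Real.rpow_sub hk]
    _ = ((k : ℝ) + 1) ^ ((p - q) * 2) := by rw [Real.rpow_mul hk.le, Real.rpow_two]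

/-- Square-summability claim from the Example of Section 3: for every
measurable `A ⊆ (0,1]`, the series `Σ_k (k^(-4/3) ∫_A x^(k^(-1/3) - 1) dx)²`
converges.  (The index `k ≥ 1` is encoded as `k + 1` with `k : ℕ`.) -/
theorem example_sq_summable (A : Set ℝ) (hA : MeasurableSet A)
    (hsub : A ⊆ Set.Ioc 0 1) :
    Summable (fun k : ℕ =>
      (((k:ℝ)+1) ^ (-(4:ℝ)/3) * ∫ x in A, x ^ (((k:ℝ)+1) ^ (-(1:ℝ)/3) - 1))^2) :=
  example_sq_summable_general hsub (by norm_num)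
end

section
/- Let f : [0,1] → ℝ be measurable and let k ≥ 1 be an integer. Then ∫_0^1 |f(x)| x^{k^{-1/3} − 1} dx ≤ 2 k^{1/3} ( ∫_0^1 |f(x)|^{2k^{1/3} − 1} dx )^{1/(2k^{1/3} − 1)}. -/
open MeasureTheory

/-!
Put `a = k ^ (1/3)` and apply Hölder's inequality with exponent `p = 2 a - 1`. Its conjugate `q`
satisfies `(a⁻¹ - 1) q = (2 a)⁻¹ - 1`, so the `L^q` norm of the weight `x ^ (a⁻¹ - 1)` on `[0, 1]`
is `(2 a) ^ (1/q) ≤ 2 a`. For `a = 1` the pair degenerates to `p = 1`, `q = ∞`, but then the weight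
is constant.
-/

open scoped ENNReal

theorem setLIntegral_Icc_ofReal_rpow {b s : ℝ} (hb : 0 ≤ b) (hs : -1 < s) :
    ∫⁻ x in Set.Icc 0 b, ENNReal.ofReal (x ^ s) = ENNReal.ofReal (b ^ (s + 1) / (s + 1)) := by
  have h_integrable : IntegrableOn (fun x : ℝ ↦ x ^ s) (Set.Ioc 0 b) :=
    (intervalIntegrable_iff_integrableOn_Ioc_of_le hb).1
      (intervalIntegral.intervalIntegrable_rpow' hs)
  have h_nonneg : 0 ≤ᵐ[volume.restrict (Set.Ioc 0 b)] fun x : ℝ ↦ x ^ s :=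
    ae_restrict_of_forall_mem measurableSet_Ioc fun x hx ↦ Real.rpow_nonneg hx.1.le s
  rw [← setLIntegral_congr Ioc_ae_eq_Icc,
    ← ofReal_integral_eq_lintegral_ofReal h_integrable h_nonneg,
    ← intervalIntegral.integral_of_le hb, integral_rpow (Or.inl hs),
    Real.zero_rpow (by linarith), sub_zero]

theorem setLIntegral_mul_ofReal_rpow_le {b s p q : ℝ} (hb : 0 ≤ b) (hpq : p.HolderConjugate q)
    (hs : -1 < s * q) {F : ℝ → ℝ≥0∞} (hF : AEMeasurable F (volume.restrict (Set.Icc 0 b))) :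
    ∫⁻ x in Set.Icc 0 b, F x * ENNReal.ofReal (x ^ s) ≤
      (∫⁻ x in Set.Icc 0 b, F x ^ p) ^ (1 / p) *
        ENNReal.ofReal (b ^ (s * q + 1) / (s * q + 1)) ^ (1 / q) := by
  have h_weight : ∫⁻ x in Set.Icc 0 b, ENNReal.ofReal (x ^ s) ^ q =
      ENNReal.ofReal (b ^ (s * q + 1) / (s * q + 1)) := by
    rw [← setLIntegral_Icc_ofReal_rpow hb hs]
    refine setLIntegral_congr_fun measurableSet_Icc fun x hx ↦ ?_
    rw [ENNReal.ofReal_rpow_of_nonneg (Real.rpow_nonneg hx.1 s) hpq.symm.nonneg,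
      Real.rpow_mul hx.1]
  rw [← h_weight]
  exact ENNReal.lintegral_mul_le_Lp_mul_Lq _ hpq hF (by fun_prop)

theorem inv_sub_one_mul_conjExponent {a : ℝ} (ha : 1 < a) :
    (a⁻¹ - 1) * (2 * a - 1).conjExponent = (2 * a)⁻¹ - 1 := by
  have h_sub : a - 1 ≠ 0 := by linarith
  rw [Real.conjExponent, show 2 * a - 1 - 1 = 2 * (a - 1) by ring]
  field_simp
  ring

theorem setLIntegral_mul_ofReal_rpow_inv_sub_one_le {a : ℝ} (ha : 1 ≤ a) {F : ℝ → ℝ≥0∞}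
    (hF : AEMeasurable F (volume.restrict (Set.Icc 0 1))) :
    ∫⁻ x in Set.Icc (0 : ℝ) 1, F x * ENNReal.ofReal (x ^ (a⁻¹ - 1)) ≤
      ENNReal.ofReal (2 * a) *
        (∫⁻ x in Set.Icc (0 : ℝ) 1, F x ^ (2 * a - 1)) ^ (1 / (2 * a - 1)) := by
  have h_const : 1 ≤ ENNReal.ofReal (2 * a) := ENNReal.one_le_ofReal.2 (by linarith)
  rcases ha.eq_or_lt with rfl | ha
  · have h_exponent : (2 * 1 - 1 : ℝ) = 1 := by norm_num
    simp only [h_exponent, inv_one, sub_self, Real.rpow_zero, ENNReal.ofReal_one, mul_one (F _),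
      ENNReal.rpow_one, div_one]
    exact le_mul_of_one_le_left' h_const
  · set q := (2 * a - 1).conjExponent
    have hpq : (2 * a - 1).HolderConjugate q := .conjExponent (by linarith)
    have h_exponent : (a⁻¹ - 1) * q = (2 * a)⁻¹ - 1 := inv_sub_one_mul_conjExponent ha
    have h_integrable : -1 < (a⁻¹ - 1) * q := by
      have : 0 < (2 * a)⁻¹ := by positivity
      linarith
    have h_weight : (1 : ℝ) ^ ((a⁻¹ - 1) * q + 1) / ((a⁻¹ - 1) * q + 1) = 2 * a := by
      rw [h_exponent, sub_add_cancel, Real.one_rpow, one_div, inv_inv]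
    have h_root : ENNReal.ofReal (2 * a) ^ (1 / q) ≤ ENNReal.ofReal (2 * a) := by
      simpa only [ENNReal.rpow_one] using
        ENNReal.rpow_le_rpow_of_exponent_le h_const ((div_le_one hpq.symm.pos).2 hpq.symm.lt.le)
    calc ∫⁻ x in Set.Icc (0 : ℝ) 1, F x * ENNReal.ofReal (x ^ (a⁻¹ - 1))
      _ ≤ (∫⁻ x in Set.Icc (0 : ℝ) 1, F x ^ (2 * a - 1)) ^ (1 / (2 * a - 1)) *
            ENNReal.ofReal (2 * a) ^ (1 / q) :=
          h_weight ▸ setLIntegral_mul_ofReal_rpow_le zero_le_one hpq h_integrable hF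
      _ ≤ ENNReal.ofReal (2 * a) *
            (∫⁻ x in Set.Icc (0 : ℝ) 1, F x ^ (2 * a - 1)) ^ (1 / (2 * a - 1)) := by
          rw [mul_comm]
          gcongr

theorem example_holder_estimate_general {f : ℝ → ℝ}
    (hf : AEMeasurable f (volume.restrict (Set.Icc 0 1))) {k : ℝ} (hk : 1 ≤ k) :
    ∫⁻ x in Set.Icc (0 : ℝ) 1, ENNReal.ofReal (|f x| * x ^ (k ^ (-(1 : ℝ) / 3) - 1)) ≤
      ENNReal.ofReal (2 * k ^ ((1 : ℝ) / 3)) *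
        (∫⁻ x in Set.Icc (0 : ℝ) 1, ENNReal.ofReal (|f x| ^ (2 * k ^ ((1 : ℝ) / 3) - 1))) ^
          (1 / (2 * k ^ ((1 : ℝ) / 3) - 1)) := by
  have h_root : 1 ≤ k ^ ((1 : ℝ) / 3) := Real.one_le_rpow hk (by norm_num)
  have h_inv : k ^ (-(1 : ℝ) / 3) = (k ^ ((1 : ℝ) / 3))⁻¹ := by
    rw [neg_div, Real.rpow_neg (by linarith)]
  have h_exponent : 0 ≤ 2 * k ^ ((1 : ℝ) / 3) - 1 := by linarith
  simp only [h_inv, ENNReal.ofReal_mul (abs_nonneg _),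
    ← ENNReal.ofReal_rpow_of_nonneg (abs_nonneg _) h_exponent]
  exact setLIntegral_mul_ofReal_rpow_inv_sub_one_le h_root (by fun_prop)

/-- Hölder-inequality estimate (eq. (12)) from the Example of Section 3:
`∫₀¹ |f| x^(k^(-1/3) - 1) dx ≤ 2 k^(1/3) (∫₀¹ |f|^(2k^(1/3) - 1) dx)^(1/(2k^(1/3)-1))`,
both sides possibly infinite (stated with lower integrals in `ℝ≥0∞`). -/
theorem example_holder_estimate (f : ℝ → ℝ) (hf : Measurable f)
    (k : ℕ) (hk : 1 ≤ k) :
    (∫⁻ x in Set.Icc (0:ℝ) 1,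
        ENNReal.ofReal (|f x| * x ^ ((k:ℝ) ^ (-(1:ℝ)/3) - 1))) ≤
      ENNReal.ofReal (2 * (k:ℝ) ^ ((1:ℝ)/3)) *
        (∫⁻ x in Set.Icc (0:ℝ) 1,
            ENNReal.ofReal (|f x| ^ (2 * (k:ℝ) ^ ((1:ℝ)/3) - 1)))
          ^ (1 / (2 * (k:ℝ) ^ ((1:ℝ)/3) - 1)) := by
  exact example_holder_estimate_general hf.aemeasurable (by exact_mod_cast hk)
end

section
/- Let f : [0,1] → ℝ be measurable and suppose there exists λ > 0 such that ∫_0^1 2^{λ |f(x)|} dx < ∞. Then for every Lebesgue-measurable set A ⊆ [0,1], Σ_{k=1}^∞ ( k^{-4/3} ∫_A |f(x)| x^{k^{-1/3} − 1} dx )^2 < ∞. -/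
open MeasureTheory

/-!
Fenchel–Young duality between `exp` and the entropy `h * log h` gives
`c ∫ g h ≤ ∫ exp (c g) + ∫ h log h`. For `h = x ^ (a - 1)` on `[0, 1]` the entropy integral is
`O(a⁻²)`, so for `0 < a ≤ 1` exponential integrability of `g` yields `∫ g x ^ (a - 1) = O(a⁻²)`.
With `a = k ^ (-1/3)` the `k`-th weighted integral is `O(k ^ (-4/3 + 2/3))`, whose square
`O(k ^ (-4/3))` is summable.
-/

open Set
open scoped ENNReal

lemma mul_le_exp_add_mul_log (y : ℝ) {h : ℝ} (hh : 0 ≤ h) :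
    y * h ≤ Real.exp y + h * Real.log h := by
  rcases hh.eq_or_lt with rfl | hpos
  · simpa using Real.exp_nonneg y
  · have tangent : y - Real.log h + 1 ≤ Real.exp y / h := by
      simpa [Real.exp_sub, Real.exp_log hpos] using Real.add_one_le_exp (y - Real.log h)
    rw [le_div_iff₀ hpos] at tangent
    linarith

lemma lintegral_mul_le_lintegral_exp_add_lintegral_mul_log {α : Type*} [MeasurableSpace α]
    {μ : Measure α} (g : α → ℝ) {h : α → ℝ} (hm : AEMeasurable h μ) (hh : ∀ᵐ x ∂μ, 0 ≤ h x) :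
    ∫⁻ x, ENNReal.ofReal (g x * h x) ∂μ ≤
      ∫⁻ x, ENNReal.ofReal (Real.exp (g x)) ∂μ +
        ∫⁻ x, ENNReal.ofReal (h x * Real.log (h x)) ∂μ := by
  rw [← lintegral_add_right' _ (by fun_prop)]
  refine lintegral_mono_ae ?_
  filter_upwards [hh] with x hx
  exact (ENNReal.ofReal_le_ofReal (mul_le_exp_add_mul_log (g x) hx)).trans ENNReal.ofReal_add_le

lemma neg_log_le_rpow_neg_div {x ε : ℝ} (hx : 0 ≤ x) (hε : 0 < ε) :
    -Real.log x ≤ x ^ (-ε) / ε := by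
  simpa [Real.log_inv, Real.inv_rpow hx, Real.rpow_neg hx] using
    Real.log_le_rpow_div (inv_nonneg.2 hx) hε

-- Half of the exponent `a` absorbs the logarithm; the other half keeps the bound integrable at `0`.
lemma rpow_mul_log_rpow_le {a x : ℝ} (ha : 0 < a) (hx : x ∈ Ioc 0 1) :
    x ^ (a - 1) * Real.log (x ^ (a - 1)) ≤ 2 / a * x ^ (a / 2 - 1) := by
  have hlog : Real.log x ≤ 0 := Real.log_nonpos hx.1.le hx.2
  calc x ^ (a - 1) * Real.log (x ^ (a - 1))
      = x ^ (a - 1) * ((a - 1) * Real.log x) := by rw [Real.log_rpow hx.1]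
    _ ≤ x ^ (a - 1) * -Real.log x :=
        mul_le_mul_of_nonneg_left (by linarith [mul_nonpos_of_nonneg_of_nonpos ha.le hlog])
          (Real.rpow_nonneg hx.1.le _)
    _ ≤ x ^ (a - 1) * (x ^ (-(a / 2)) / (a / 2)) :=
        mul_le_mul_of_nonneg_left (neg_log_le_rpow_neg_div hx.1.le (half_pos ha))
          (Real.rpow_nonneg hx.1.le _)
    _ = 2 / a * x ^ (a / 2 - 1) := by
        rw [← mul_div_assoc, ← Real.rpow_add hx.1, show a - 1 + -(a / 2) = a / 2 - 1 by ring]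
        field_simp

lemma lintegral_Ioc_rpow_sub_one {a : ℝ} (ha : 0 < a) :
    ∫⁻ x in Ioc (0 : ℝ) 1, ENNReal.ofReal (x ^ (a - 1)) = ENNReal.ofReal (1 / a) := by
  have hint : IntegrableOn (fun x : ℝ => x ^ (a - 1)) (Ioc 0 1) :=
    (intervalIntegrable_iff_integrableOn_Ioc_of_le zero_le_one).1
      (intervalIntegral.intervalIntegrable_rpow' (by linarith))
  have hnonneg : ∀ᵐ x ∂volume.restrict (Ioc (0 : ℝ) 1), 0 ≤ x ^ (a - 1) :=
    ae_restrict_of_forall_mem measurableSet_Ioc fun x hx => Real.rpow_nonneg hx.1.le _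
  rw [← ofReal_integral_eq_lintegral_ofReal hint hnonneg,
    ← intervalIntegral.integral_of_le zero_le_one, integral_rpow (Or.inl (by linarith))]
  simp [ha.ne']

lemma lintegral_Ioc_rpow_mul_log_rpow_le {a : ℝ} (ha : 0 < a) :
    ∫⁻ x in Ioc (0 : ℝ) 1, ENNReal.ofReal (x ^ (a - 1) * Real.log (x ^ (a - 1))) ≤
      ENNReal.ofReal (4 / a ^ 2) :=
  calc ∫⁻ x in Ioc (0 : ℝ) 1, ENNReal.ofReal (x ^ (a - 1) * Real.log (x ^ (a - 1)))
      ≤ ∫⁻ x in Ioc (0 : ℝ) 1, ENNReal.ofReal (2 / a) * ENNReal.ofReal (x ^ (a / 2 - 1)) := by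
        refine setLIntegral_mono' measurableSet_Ioc fun x hx => ?_
        rw [← ENNReal.ofReal_mul (by positivity)]
        exact ENNReal.ofReal_le_ofReal (rpow_mul_log_rpow_le ha hx)
    _ = ENNReal.ofReal (2 / a) * ENNReal.ofReal (1 / (a / 2)) := by
        rw [lintegral_const_mul' _ _ ENNReal.ofReal_ne_top,
          lintegral_Ioc_rpow_sub_one (half_pos ha)]
    _ = ENNReal.ofReal (4 / a ^ 2) := by
        rw [← ENNReal.ofReal_mul (by positivity)]
        congr 1
        field_simp
        norm_num

lemma setLIntegral_mul_rpow_sub_one_le {A : Set ℝ} (hA : A ⊆ Icc 0 1) (g : ℝ → ℝ) {a c : ℝ}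
    (ha : 0 < a) (hc : 0 < c) :
    ∫⁻ x in A, ENNReal.ofReal (g x * x ^ (a - 1)) ≤
      ((∫⁻ x in A, ENNReal.ofReal (Real.exp (c * g x))) + ENNReal.ofReal (4 / a ^ 2)) /
        ENNReal.ofReal c := by
  have hnonneg : ∀ᵐ x ∂volume.restrict A, 0 ≤ x ^ (a - 1) :=
    ae_restrict_of_ae_restrict_of_subset hA
      (ae_restrict_of_forall_mem measurableSet_Icc fun x hx => Real.rpow_nonneg hx.1 _)
  have entropy : ∫⁻ x in A, ENNReal.ofReal (x ^ (a - 1) * Real.log (x ^ (a - 1))) ≤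
      ENNReal.ofReal (4 / a ^ 2) :=
    (lintegral_mono_set hA).trans
      ((setLIntegral_congr Ioc_ae_eq_Icc).symm.trans_le (lintegral_Ioc_rpow_mul_log_rpow_le ha))
  rw [ENNReal.le_div_iff_mul_le (by simp [hc]) (by simp), mul_comm,
    ← lintegral_const_mul' _ _ ENNReal.ofReal_ne_top]
  simp_rw [← ENNReal.ofReal_mul hc.le, ← mul_assoc]
  exact (lintegral_mul_le_lintegral_exp_add_lintegral_mul_log (fun x => c * g x) (by fun_prop)
    hnonneg).trans (by gcongr)

lemma setLIntegral_mul_rpow_sub_one_le_div_sq {A : Set ℝ} (hA : A ⊆ Icc 0 1) (g : ℝ → ℝ)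
    {a c : ℝ} (ha : 0 < a) (ha1 : a ≤ 1) (hc : 0 < c) :
    ∫⁻ x in A, ENNReal.ofReal (g x * x ^ (a - 1)) ≤
      ((∫⁻ x in A, ENNReal.ofReal (Real.exp (c * g x))) + 4) / ENNReal.ofReal c /
        ENNReal.ofReal a ^ 2 := by
  have hsq : ENNReal.ofReal a ^ 2 ≤ 1 := pow_le_one₀ zero_le (by simpa using ha1)
  have hfour : ENNReal.ofReal (4 / a ^ 2) = 4 / ENNReal.ofReal a ^ 2 := by
    rw [ENNReal.ofReal_div_of_pos (by positivity), ENNReal.ofReal_pow ha.le, ENNReal.ofReal_ofNat]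
  have hle (t : ℝ≥0∞) : t ≤ t / ENNReal.ofReal a ^ 2 :=
    (ENNReal.le_div_iff_mul_le (by simp [ha]) (by simp)).2 (mul_le_of_le_one_right' hsq)
  refine (setLIntegral_mul_rpow_sub_one_le hA g ha hc).trans ?_
  rw [hfour, ENNReal.div_right_comm (b := ENNReal.ofReal c), ENNReal.add_div (b := 4)]
  exact ENNReal.div_le_div_right (add_le_add_left (hle _) _) _

lemma tsum_sq_rpow_div_sq_rpow_lt_top {p q : ℝ} (hpq : 2 * (p - 2 * q) < -1) :
    ∑' k : ℕ, (ENNReal.ofReal (((k : ℝ) + 1) ^ p) /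
      ENNReal.ofReal (((k : ℝ) + 1) ^ q) ^ 2) ^ 2 < ⊤ := by
  have hsum : Summable fun k : ℕ => ((k : ℝ) + 1) ^ (2 * (p - 2 * q)) := by
    simpa using (summable_nat_add_iff 1).2 (Real.summable_nat_rpow.2 hpq)
  convert hsum.tsum_ofReal_lt_top using 3 with k
  have hk : (0 : ℝ) < k + 1 := by positivity
  rw [← ENNReal.ofReal_pow (by positivity), ← ENNReal.ofReal_div_of_pos (by positivity),
    ← ENNReal.ofReal_pow (by positivity), ← Real.rpow_mul_natCast hk.le, ← Real.rpow_sub hk,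
    ← Real.rpow_mul_natCast hk.le]
  ring_nf

-- `ENNReal.ofReal` truncates at `0`, so a signed `g` enters only through its positive part in the
-- conclusion.
theorem example_exp_integrable_implies_sq_summable_general {ι : Type*} {A : Set ℝ}
    (hA : A ⊆ Icc 0 1) (g : ℝ → ℝ) {c : ℝ} (hc : 0 < c)
    (hexp : ∫⁻ x in A, ENNReal.ofReal (Real.exp (c * g x)) < ⊤)
    {w : ι → ℝ≥0∞} {a : ι → ℝ} (ha : ∀ i, 0 < a i) (ha1 : ∀ i, a i ≤ 1)
    (hw : ∑' i, (w i / ENNReal.ofReal (a i) ^ 2) ^ 2 < ⊤) :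
    ∑' i, (w i * ∫⁻ x in A, ENNReal.ofReal (g x * x ^ (a i - 1))) ^ 2 < ⊤ := by
  set K := ((∫⁻ x in A, ENNReal.ofReal (Real.exp (c * g x))) + 4) / ENNReal.ofReal c
  have hK : K < ⊤ := ENNReal.div_lt_top (by finiteness) (by simp [hc])
  calc ∑' i, (w i * ∫⁻ x in A, ENNReal.ofReal (g x * x ^ (a i - 1))) ^ 2
      ≤ ∑' i, (w i * (K / ENNReal.ofReal (a i) ^ 2)) ^ 2 := by
        gcongr with i
        exact setLIntegral_mul_rpow_sub_one_le_div_sq hA g (ha i) (ha1 i) hc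
    _ = K ^ 2 * ∑' i, (w i / ENNReal.ofReal (a i) ^ 2) ^ 2 := by
        rw [← ENNReal.tsum_mul_left]
        exact tsum_congr fun i => by simp only [div_eq_mul_inv, mul_left_comm (w i), mul_pow]
    _ < ⊤ := ENNReal.mul_lt_top (ENNReal.pow_lt_top hK) hw

/-- Main analytic claim of the Example in Section 3: if `∫₀¹ 2^(λ|f|) dx < ∞`
for some `λ > 0`, then for every measurable `A ⊆ [0,1]` the series
`Σ_k (k^(-4/3) ∫_A |f(x)| x^(k^(-1/3) - 1) dx)²` is finite.
(The index `k ≥ 1` is encoded as `k + 1` with `k : ℕ`; integrals are lower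
integrals in `ℝ≥0∞` so that everything is well defined.) -/
theorem example_exp_integrable_implies_sq_summable
    (f : ℝ → ℝ) (hf : Measurable f)
    (hexp : ∃ lam : ℝ, 0 < lam ∧
      (∫⁻ x in Set.Icc (0:ℝ) 1, ENNReal.ofReal ((2:ℝ) ^ (lam * |f x|))) < ⊤) :
    ∀ A : Set ℝ, MeasurableSet A → A ⊆ Set.Icc 0 1 →
      (∑' k : ℕ,
        (ENNReal.ofReal (((k:ℝ)+1) ^ (-(4:ℝ)/3)) *
          ∫⁻ x in A,
            ENNReal.ofReal (|f x| * x ^ (((k:ℝ)+1) ^ (-(1:ℝ)/3) - 1)))^2) < ⊤ := by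
  obtain ⟨lam, hlam, hfin⟩ := hexp
  intro A _ hA
  have hlog : 0 < Real.log 2 := Real.log_pos one_lt_two
  have hexpA : ∫⁻ x in A, ENNReal.ofReal (Real.exp (Real.log 2 * lam * |f x|)) < ⊤ := by
    simp_rw [mul_assoc, ← Real.rpow_def_of_pos two_pos]
    exact (lintegral_mono_set hA).trans_lt hfin
  exact example_exp_integrable_implies_sq_summable_general hA (fun x => |f x|)
    (mul_pos hlog hlam) hexpA (fun k => by positivity)
    (fun k => Real.rpow_le_one_of_one_le_of_nonpos (by simp) (by norm_num))
    (tsum_sq_rpow_div_sq_rpow_lt_top (by norm_num))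
end
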